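/- arXiv:1612.05944 — 5 statements merged into one kernel-verified Lean document; each statement's English description precedes it below -/
import Mathlib

section
/- Let I, C : ℕ → ℝ be a Gregory pair, i.e. 0 < I 0 < C 0, I (n+1) = Real.sqrt (C n * I n), C (n+1) = 2 * C n * I (n+1) / (C n + I (n+1)). Then the sequence I is strictly monotone increasing: for all n, I n < I (n+1). -/
/-- The geometric mean of `a < b` lies strictly between them. -/
lemma between_sqrt_mul {a b : ℝ} (ha : 0 < a) (hab : a < b) :
    a < Real.sqrt (b * a) ∧ Real.sqrt (b * a) < b :=
  ⟨Real.lt_sqrt_of_sq_lt (by nlinarith),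
    (Real.sqrt_lt' (ha.trans hab)).2 (by nlinarith)⟩

theorem gregory_pair_I_strictMono
    (I C : ℕ → ℝ)
    (h0 : 0 < I 0) (h1 : I 0 < C 0)
    (hI : ∀ n, I (n + 1) = Real.sqrt (C n * I n))
    (hC : ∀ n, C (n + 1) = 2 * C n * I (n + 1) / (C n + I (n + 1))) :
    ∀ n, I n < I (n + 1) := by
  -- The order `0 < I n < C n` is preserved: `I (n + 1)` is the geometric mean of `I n` and `C n`,
  -- and `C (n + 1)` is the harmonic mean of `I (n + 1)` and `C n`, hence exceeds `I (n + 1)`.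
  have key : ∀ n, 0 < I n ∧ I n < C n := by
    intro n
    induction n with
    | zero => exact ⟨h0, h1⟩
    | succ n ih =>
      obtain ⟨hl, hr⟩ := between_sqrt_mul ih.1 ih.2
      rw [← hI n] at hl hr
      have hpos : 0 < I (n + 1) := ih.1.trans hl
      refine ⟨hpos, ?_⟩
      rw [hC n, lt_div_iff₀ (by linarith)]
      nlinarith
  intro n
  rw [hI n]
  exact (between_sqrt_mul (key n).1 (key n).2).1
end

section
/- Let I, C : ℕ → ℝ be a Gregory pair, i.e. 0 < I 0 < C 0, I (n+1) = Real.sqrt (C n * I n), C (n+1) = 2 * C n * I (n+1) / (C n + I (n+1)). Then the sequence C is strictly monotone decreasing: for all n, C (n+1) < C n. -/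
/-!
`C (n + 1)` is the harmonic mean of `C n` and `I (n + 1)`, and `I (n + 1)` is the geometric mean of
`C n` and `I n`. Strict inequalities between means therefore preserve the invariant
`0 < I n < C n` and force `I (n + 1) < C (n + 1) < C n`.
-/

theorem sqrt_mul_pos_and_lt {i c : ℝ} (hi : 0 < i) (hic : i < c) :
    0 < Real.sqrt (c * i) ∧ Real.sqrt (c * i) < c := by
  have hc : 0 < c := hi.trans hic
  refine ⟨Real.sqrt_pos.2 (mul_pos hc hi), (Real.sqrt_lt' hc).2 ?_⟩
  nlinarith

/-- The harmonic mean of two distinct positive reals lies strictly between them. -/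
theorem harmonic_mean_between {s c : ℝ} (hs : 0 < s) (hsc : s < c) :
    s < 2 * c * s / (c + s) ∧ 2 * c * s / (c + s) < c := by
  have hc : 0 < c := hs.trans hsc
  have hcs : 0 < c + s := add_pos hc hs
  constructor
  · rw [lt_div_iff₀ hcs]
    nlinarith
  · rw [div_lt_iff₀ hcs]
    nlinarith

theorem gregory_pair_C_strictAnti
    (I C : ℕ → ℝ)
    (h0 : 0 < I 0) (h1 : I 0 < C 0)
    (hI : ∀ n, I (n + 1) = Real.sqrt (C n * I n))
    (hC : ∀ n, C (n + 1) = 2 * C n * I (n + 1) / (C n + I (n + 1))) :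
    ∀ n, C (n + 1) < C n := by
  have step : ∀ n, 0 < I n → I n < C n → 0 < I (n + 1) ∧ I (n + 1) < C n := by
    intro n hi hic
    rw [hI n]
    exact sqrt_mul_pos_and_lt hi hic
  have inv : ∀ n, 0 < I n ∧ I n < C n := by
    intro n
    induction n with
    | zero => exact ⟨h0, h1⟩
    | succ k ih =>
      obtain ⟨hs, hsc⟩ := step k ih.1 ih.2
      refine ⟨hs, ?_⟩
      rw [hC k]
      exact (harmonic_mean_between hs hsc).1
  intro n
  obtain ⟨hs, hsc⟩ := step n (inv n).1 (inv n).2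
  rw [hC n]
  exact (harmonic_mean_between hs hsc).2
end

section
/- Let I, C : ℕ → ℝ be a Gregory pair, i.e. 0 < I 0 < C 0, I (n+1) = Real.sqrt (C n * I n), C (n+1) = 2 * C n * I (n+1) / (C n + I (n+1)). Then for every n, C (n+1) - I (n+1) < (C n - I n) / 2; that is, the difference between the circumscribed and inscribed terms more than halves at each step. -/
/-!
Write `c = C n`, `i = I n` and `s = I (n + 1)`, so `s ^ 2 = c * i` and `i < s < c`. The new
difference is `s * (c - s) / (c + s)`, while `c * (c - i) = c ^ 2 - s ^ 2 = (c - s) * (c + s)`.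
The halving inequality therefore reduces to `2 * c * s < (c + s) ^ 2`, which is clear for positive
`c` and `s`. Positivity of the new difference propagates `0 < I n < C n` along the sequence.
-/

/-- One step of the recursion, with the geometric mean `s` given by `s ^ 2 = c * i`: the new
difference is positive and less than half the old one. -/
lemma gregory_step {i c s : ℝ} (hi : 0 < i) (hic : i < c) (hs : 0 < s) (hsq : s ^ 2 = c * i) :
    s < 2 * c * s / (c + s) ∧ 2 * c * s / (c + s) - s < (c - i) / 2 := by
  have hc : 0 < c := hi.trans hic
  have hsc : s < c := by nlinarith
  have hcs : 0 < c + s := by positivity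
  have hdiff : 2 * c * s / (c + s) - s = s * (c - s) / (c + s) := by
    field_simp
    ring
  constructor
  · have : 0 < s * (c - s) / (c + s) := div_pos (mul_pos hs (sub_pos.2 hsc)) hcs
    linarith
  · have hold : (c - i) / 2 = (c - s) * (c + s) / (2 * c) := by
      field_simp
      linear_combination hsq
    rw [hdiff, hold, div_lt_div_iff₀ hcs (by positivity)]
    -- the two sides differ by `(c - s) * ((c + s) ^ 2 - 2 * c * s)`
    have : 0 < (c - s) * (c ^ 2 + s ^ 2) := mul_pos (sub_pos.2 hsc) (by positivity)
    linarith

theorem gregory_pair_diff_halves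
    (I C : ℕ → ℝ)
    (h0 : 0 < I 0) (h1 : I 0 < C 0)
    (hI : ∀ n, I (n + 1) = Real.sqrt (C n * I n))
    (hC : ∀ n, C (n + 1) = 2 * C n * I (n + 1) / (C n + I (n + 1))) :
    ∀ n, C (n + 1) - I (n + 1) < (C n - I n) / 2 := by
  have hmean : ∀ n, 0 < I n → I n < C n → 0 < I (n + 1) ∧ I (n + 1) ^ 2 = C n * I n := by
    intro n hi hic
    have hpos : 0 < C n * I n := mul_pos (hi.trans hic) hi
    rw [hI n]
    exact ⟨Real.sqrt_pos.2 hpos, Real.sq_sqrt hpos.le⟩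
  have hord : ∀ n, 0 < I n ∧ I n < C n := by
    intro n
    induction n with
    | zero => exact ⟨h0, h1⟩
    | succ n ih =>
      obtain ⟨hs, hsq⟩ := hmean n ih.1 ih.2
      refine ⟨hs, ?_⟩
      rw [hC n]
      exact (gregory_step ih.1 ih.2 hs hsq).1
  intro n
  obtain ⟨hi, hic⟩ := hord n
  obtain ⟨hs, hsq⟩ := hmean n hi hic
  rw [hC n]
  exact (gregory_step hi hic hs hsq).2
end

section
/- Let I, C : ℕ → ℝ be a Gregory pair, i.e. 0 < I 0 < C 0, I (n+1) = Real.sqrt (C n * I n), C (n+1) = 2 * C n * I (n+1) / (C n + I (n+1)). Then for every ε > 0 there exists N such that for all n ≥ N, C n - I n < ε. -/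
/-!
One step of the recursion at least halves the gap. Write `s = I (n+1)`, the geometric mean of
`I n` and `C n`, so that `I n < s < C n`. Then `C (n+1)` is the harmonic mean of `C n` and `s`:
it exceeds `s`, and is at most the arithmetic mean `(C n + s) / 2`. Therefore
`0 < C (n+1) - I (n+1) ≤ (C n - s) / 2 ≤ (C n - I n) / 2`, and the gap is bounded by
`(C 0 - I 0) / 2 ^ n`.
-/

/-- The order `0 < I < C` is preserved by one step, and the gap is at least halved. -/
lemma gregory_step_s5 {a c s : ℝ} (ha : 0 < a) (hac : a < c) (hs : s = Real.sqrt (c * a)) :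
    0 < s ∧ s < 2 * c * s / (c + s) ∧ 2 * c * s / (c + s) - s ≤ (c - a) / 2 := by
  have hc : 0 < c := ha.trans hac
  have hs0 : 0 < s := hs ▸ Real.sqrt_pos.2 (mul_pos hc ha)
  have hsa : a < s := hs ▸ Real.lt_sqrt_of_sq_lt (by nlinarith)
  have hsc : s < c := hs ▸ (Real.sqrt_lt' hc).2 (by nlinarith)
  have hmean : 2 * c * s / (c + s) ≤ (c + s) / 2 := by
    rw [div_le_iff₀ (by positivity)]
    nlinarith [sq_nonneg (c - s)]
  refine ⟨hs0, ?_, by linarith⟩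
  rw [lt_div_iff₀ (by positivity)]
  nlinarith

theorem gregory_pair_diff_lt_eps
    (I C : ℕ → ℝ)
    (h0 : 0 < I 0) (h1 : I 0 < C 0)
    (hI : ∀ n, I (n + 1) = Real.sqrt (C n * I n))
    (hC : ∀ n, C (n + 1) = 2 * C n * I (n + 1) / (C n + I (n + 1))) :
    ∀ ε > (0 : ℝ), ∃ N : ℕ, ∀ n ≥ N, C n - I n < ε := by
  have key : ∀ n, 0 < I n ∧ I n < C n ∧ C n - I n ≤ (C 0 - I 0) * (1 / 2) ^ n := by
    intro n
    induction n with
    | zero => exact ⟨h0, h1, by simp⟩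
    | succ n ih =>
      obtain ⟨hpos, hlt, hgap⟩ := ih
      obtain ⟨hs, hsC, hhalf⟩ := gregory_step_s5 hpos hlt (hI n)
      rw [← hC n] at hsC hhalf
      refine ⟨hs, hsC, ?_⟩
      rw [pow_succ]
      linarith
  intro ε hε
  have hlim : Filter.Tendsto (fun n : ℕ => (C 0 - I 0) * (1 / 2 : ℝ) ^ n) Filter.atTop
      (nhds 0) := by
    simpa using (tendsto_pow_atTop_nhds_zero_of_lt_one (r := (1 / 2 : ℝ))
      (by norm_num) (by norm_num)).const_mul (C 0 - I 0)
  obtain ⟨N, hN⟩ := Filter.eventually_atTop.1 (hlim.eventually_lt_const hε)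
  exact ⟨N, fun n hn => (key n).2.2.trans_lt (hN n hn)⟩
end

section
/- Define I, C : ℕ → ℝ by I 0 = 2, C 0 = 4, I (n+1) = Real.sqrt (C n * I n), and C (n+1) = 2 * C n * I (n+1) / (C n + I (n+1)). Then I converges to π and C converges to π. -/
open Real Filter

/-!
The regular polygon with `2 ^ (n + 2)` sides has half central angle `t n = π / 2 ^ (n + 2)`.
Splitting it into isosceles triangles gives area `π * sinc t * cos t` when it is inscribed in the
unit circle and `π * sinc t / cos t` when it is circumscribed about it. The half-angle identities
`sinc (2 * u) = sinc u * cos u` and `cos (2 * u) = 2 * cos u ^ 2 - 1` show that these expressions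
satisfy Gregory's recursions (`gregory_closed_form`). Since `t n → 0` and `sinc`, `cos` are
continuous with value `1` at `0`, both sequences tend to `π`.
-/

/-- Half the central angle subtended by a side of the regular polygon with `2 ^ (n + 2)` sides. -/
noncomputable def halfAngle (n : ℕ) : ℝ := π / 2 ^ (n + 2)

lemma halfAngle_pos (n : ℕ) : 0 < halfAngle n := by
  unfold halfAngle; positivity

lemma halfAngle_eq_two_mul (n : ℕ) : halfAngle n = 2 * halfAngle (n + 1) := by
  unfold halfAngle; field_simp; ring

lemma halfAngle_lt_pi_div_two (n : ℕ) : halfAngle n < π / 2 := by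
  unfold halfAngle
  have h : (2 : ℝ) < 2 ^ (n + 2) := by
    have : (1 : ℝ) ≤ 2 ^ n := one_le_pow₀ (by norm_num)
    rw [pow_add]; linarith
  exact div_lt_div_of_pos_left pi_pos (by norm_num) h

lemma cos_halfAngle_pos (n : ℕ) : 0 < cos (halfAngle n) :=
  cos_pos_of_mem_Ioo ⟨by linarith [halfAngle_pos n, pi_pos], halfAngle_lt_pi_div_two n⟩

lemma sinc_halfAngle_pos (n : ℕ) : 0 < sinc (halfAngle n) := by
  rw [sinc_of_ne_zero (halfAngle_pos n).ne']
  exact div_pos (sin_pos_of_pos_of_lt_pi (halfAngle_pos n)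
    (by linarith [halfAngle_lt_pi_div_two n, pi_pos])) (halfAngle_pos n)

lemma sinc_halfAngle_succ (n : ℕ) :
    sinc (halfAngle n) = sinc (halfAngle (n + 1)) * cos (halfAngle (n + 1)) := by
  have h := (halfAngle_pos (n + 1)).ne'
  rw [halfAngle_eq_two_mul n, sinc_of_ne_zero (mul_ne_zero two_ne_zero h), sinc_of_ne_zero h,
    sin_two_mul]
  field_simp

lemma cos_halfAngle_succ (n : ℕ) :
    cos (halfAngle n) = 2 * cos (halfAngle (n + 1)) ^ 2 - 1 := by
  rw [halfAngle_eq_two_mul n, cos_two_mul]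

lemma tendsto_halfAngle : Tendsto halfAngle atTop (nhds 0) := by
  have h : Tendsto (fun n : ℕ => π * (1 / 2 : ℝ) ^ (n + 2)) atTop (nhds (π * 0)) :=
    ((tendsto_add_atTop_iff_nat 2).2
      (tendsto_pow_atTop_nhds_zero_of_lt_one (by norm_num) (by norm_num))).const_mul π
  rw [mul_zero] at h
  refine h.congr fun n => ?_
  rw [halfAngle, one_div, inv_pow, div_eq_mul_inv]

/-- The terms of Gregory's sequences are the areas of the inscribed and circumscribed regular
polygons with `2 ^ (n + 2)` sides. -/
lemma gregory_closed_form
    (I C : ℕ → ℝ)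
    (hI0 : I 0 = 2) (hC0 : C 0 = 4)
    (hI : ∀ n, I (n + 1) = Real.sqrt (C n * I n))
    (hC : ∀ n, C (n + 1) = 2 * C n * I (n + 1) / (C n + I (n + 1))) (n : ℕ) :
    I n = π * sinc (halfAngle n) * cos (halfAngle n) ∧
      C n = π * sinc (halfAngle n) / cos (halfAngle n) := by
  induction n with
  | zero =>
    have h0 : halfAngle 0 = π / 4 := by norm_num [halfAngle]
    have hs : √2 * √2 = (2 : ℝ) := mul_self_sqrt (by norm_num)
    rw [hI0, hC0, h0, sinc_of_ne_zero (by positivity), sin_pi_div_four, cos_pi_div_four]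
    constructor
    · field_simp
      nlinarith
    · field_simp
  | succ n ih =>
    obtain ⟨ihI, ihC⟩ := ih
    have hc := cos_halfAngle_pos n
    have hc' := cos_halfAngle_pos (n + 1)
    have hs := sinc_halfAngle_pos n
    have hs' := sinc_halfAngle_pos (n + 1)
    have hI' : I (n + 1) = π * sinc (halfAngle n) := by
      rw [hI, ihI, ihC, ← sqrt_sq (by positivity : 0 ≤ π * sinc (halfAngle n))]
      congr 1
      rw [sqrt_sq (by positivity)]
      field_simp
    refine ⟨by rw [hI', sinc_halfAngle_succ]; ring, ?_⟩
    have hC' : C (n + 1) = 2 * (π * sinc (halfAngle n)) / (1 + cos (halfAngle n)) := by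
      rw [hC, hI', ihC]
      field_simp
    have hden : 1 + cos (halfAngle n) = 2 * cos (halfAngle (n + 1)) ^ 2 := by
      rw [cos_halfAngle_succ]; ring
    rw [hC', hden, sinc_halfAngle_succ]
    field_simp

theorem gregory_squares_tendsto_pi
    (I C : ℕ → ℝ)
    (hI0 : I 0 = 2) (hC0 : C 0 = 4)
    (hI : ∀ n, I (n + 1) = Real.sqrt (C n * I n))
    (hC : ∀ n, C (n + 1) = 2 * C n * I (n + 1) / (C n + I (n + 1))) :
    Tendsto I atTop (nhds π) ∧ Tendsto C atTop (nhds π) := by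
  have h := gregory_closed_form I C hI0 hC0 hI hC
  have hs : Tendsto (fun n => sinc (halfAngle n)) atTop (nhds 1) := by
    simpa [Function.comp_def] using (continuous_sinc.tendsto 0).comp tendsto_halfAngle
  have hc : Tendsto (fun n => cos (halfAngle n)) atTop (nhds 1) := by
    simpa [Function.comp_def] using (continuous_cos.tendsto 0).comp tendsto_halfAngle
  constructor
  · have := (hs.const_mul π).mul hc
    simp only [mul_one] at this
    exact this.congr fun n => (h n).1.symm
  · have := (hs.const_mul π).div hc one_ne_zero
    simp only [mul_one, div_one] at this
    exact this.congr fun n => (h n).2.symm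
end
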